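/- Let k be an infinite field, d = 2c, and φ a 3×2 matrix of forms of degree c in B = k[x,y] with ht I₂(φ) = 2 and μ(I₁(φ)) ≥ 3 (the entries span a k-space of dimension at least 3). If two of the entries of φ are x^c and y^{c-1}(x+y), then the morphism ℙ¹ → ℙ² given by the signed 2×2 minors of φ is birational onto its image. -/

import Mathlib

open MvPolynomial

/-- The height of an ideal: the infimum of the heights of the primes containing it. -/
noncomputable def idealHeight {R : Type*} [CommRing R] (I : Ideal R) : ℕ∞ :=
  ⨅ (P : PrimeSpectrum R) (_ : I ≤ P.asIdeal), Order.height P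

namespace Polynomial

noncomputable def hom2 {k : Type*} [Field k] (p q : k[X]) (m : ℕ) : k[X] →ₗ[k] k[X] where
  toFun P := ∑ j ∈ Finset.range (m+1), C (P.coeff j) * (p^j * q^(m-j))
  map_add' P Q := by simp [add_mul, Finset.sum_add_distrib]
  map_smul' a P := by simp [mul_assoc, Finset.mul_sum, smul_eq_C_mul]

theorem hom2_apply {k : Type*} [Field k] (p q : k[X]) (m : ℕ) (P : k[X]) :
    hom2 p q m P = ∑ j ∈ Finset.range (m+1), C (P.coeff j) * (p^j * q^(m-j)) := rfl

theorem hom2_map {k : Type*} [Field k] (p q : k[X]) (hq : q ≠ 0) (m : ℕ) (P : k[X])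
    (hP : P.natDegree ≤ m) :
    algebraMap k[X] (RatFunc k) (hom2 p q m P) =
      (algebraMap k[X] (RatFunc k) q)^m *
        aeval (algebraMap k[X] (RatFunc k) p / algebraMap k[X] (RatFunc k) q) P := by
  have hq' : algebraMap k[X] (RatFunc k) q ≠ 0 := by
    simpa using hq
  rw [hom2_apply, Polynomial.aeval_eq_sum_range' (Nat.lt_succ_of_le hP), map_sum, Finset.mul_sum]
  refine Finset.sum_congr rfl fun j hj => ?_
  have hj : j ≤ m := by simpa [Nat.lt_succ_iff] using hj
  obtain ⟨i, rfl⟩ := Nat.exists_eq_add_of_le hj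
  have : algebraMap k[X] (RatFunc k) (C (P.coeff j)) = algebraMap k (RatFunc k) (P.coeff j) := rfl
  simp only [map_mul, map_pow, this, Algebra.smul_def, div_pow, pow_add, Nat.add_sub_cancel_left]
  field_simp

theorem hom2_mul {k : Type*} [Field k] (p q : k[X]) (hq : q ≠ 0) (m n : ℕ) (P Q : k[X])
    (hP : P.natDegree ≤ m) (hQ : Q.natDegree ≤ n) :
    hom2 p q (m+n) (P*Q) = hom2 p q m P * hom2 p q n Q := by
  apply IsFractionRing.injective k[X] (RatFunc k)
  rw [RingHom.map_mul, hom2_map p q hq _ _ hP, hom2_map p q hq _ _ hQ, hom2_map p q hq]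
  · rw [map_mul]; ring
  · exact natDegree_mul_le.trans (by omega)

theorem hom2_natDegree_le {k : Type*} [Field k] (p q : k[X]) (h : q.natDegree ≤ p.natDegree)
    (m : ℕ) (P : k[X]) : (hom2 p q m P).natDegree ≤ m * p.natDegree := by
  rw [hom2_apply]
  refine natDegree_sum_le_of_forall_le _ _ fun j hj => ?_
  have hj : j ≤ m := by simpa [Nat.lt_succ_iff] using hj
  refine (natDegree_C_mul_le _ _).trans (natDegree_mul_le.trans ?_)
  refine (add_le_add natDegree_pow_le natDegree_pow_le).trans ?_
  obtain ⟨i, rfl⟩ := Nat.exists_eq_add_of_le hj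
  rw [Nat.add_sub_cancel_left, add_mul]
  gcongr

theorem hom2_degree {k : Type*} [Field k] (p q : k[X]) (hq : q ≠ 0)
    (h : q.natDegree < p.natDegree)
    (m : ℕ) (P : k[X]) (hP : P ≠ 0) (hPm : P.natDegree ≤ m) :
    (hom2 p q m P).degree =
      ((P.natDegree * p.natDegree + (m - P.natDegree) * q.natDegree : ℕ) : WithBot ℕ) := by
  have hp : p ≠ 0 := by rintro rfl; simp at h
  set D := P.natDegree with hD
  have key : hom2 p q m P = C (P.coeff D) * (p^D * q^(m-D)) +
      ∑ j ∈ Finset.range D, C (P.coeff j) * (p^j * q^(m-j)) := by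
    rw [hom2_apply, add_comm (C _ * _), ← Finset.sum_range_succ (fun j => C (P.coeff j) * (p^j * q^(m-j)))]
    symm
    apply Finset.sum_subset
    · intro j; simp; omega
    · intro j _ hj
      have : P.natDegree < j := by simp at hj; omega
      simp [coeff_eq_zero_of_natDegree_lt this]
  have hl : (C (P.coeff D) * (p^D * q^(m-D))).degree =
      ((D * p.natDegree + (m - D) * q.natDegree : ℕ) : WithBot ℕ) := by
    have hne : P.coeff D ≠ 0 := by simpa [hD] using hP
    rw [degree_C_mul hne, degree_eq_natDegree (by positivity), natDegree_mul (by positivity) (by positivity)]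
    simp
  rw [key, degree_add_eq_left_of_degree_lt, hl]
  rw [hl]
  refine (Finset.sum_induction _ (fun x : k[X] => x.degree < ((D * p.natDegree + (m - D) * q.natDegree : ℕ) : WithBot ℕ)) ?_ ?_ ?_)
  · intro a b ha hb
    exact (degree_add_le _ _).trans_lt (max_lt ha hb)
  · rw [degree_zero]; exact WithBot.bot_lt_coe _
  · intro j hj
    have hj : j < D := by simpa using hj
    refine (degree_le_natDegree).trans_lt ?_
    rw [Nat.cast_lt]
    refine (natDegree_C_mul_le _ _).trans_lt (natDegree_mul_le.trans_lt ?_)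
    rw [natDegree_pow, natDegree_pow]
    obtain ⟨i, hi⟩ := Nat.exists_eq_add_of_lt hj
    obtain ⟨l, rfl⟩ := Nat.exists_eq_add_of_le hPm
    rw [Nat.add_sub_cancel_left, hi, show j + i + 1 + l - j = (i+1) + l by omega]
    have : (i+1) * q.natDegree < (i+1) * p.natDegree := by gcongr
    nlinarith

theorem syz {R : Type*} [CommRing R] (A B s a g : Fin 3 → R)
    (g0 : g 0 = A 1 * B 2 - A 2 * B 1) (g1 : g 1 = A 2 * B 0 - A 0 * B 2)
    (g2 : g 2 = A 0 * B 1 - A 1 * B 0) (ha : ∑ i, a i * g i = 1) (hs : ∑ i, s i * g i = 0) 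
    (i : Fin 3) : s i =
     (a 0 * (s 1 * B 2 - s 2 * B 1) + a 1 * (s 2 * B 0 - s 0 * B 2) + a 2 * (s 0 * B 1 - s 1 * B 0)) * A i
     + (a 0 * (A 1 * s 2 - A 2 * s 1) + a 1 * (A 2 * s 0 - A 0 * s 2) + a 2 * (A 0 * s 1 - A 1 * s 0)) * B i := by
  simp only [Fin.sum_univ_three, g0, g1, g2] at ha hs
  fin_cases i
  · simp; linear_combination - s 0 * ha + a 0 * hs
  · simp; linear_combination - s 1 * ha + a 1 * hs
  · simp; linear_combination - s 2 * ha + a 2 * hs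

theorem natDegree_lt_of_le_of_coeff_ne_zero' {k : Type*} [Field k] {a : k[X]} {n : ℕ}
    (h : a.natDegree ≤ n) (h0 : a.coeff n = 0) (hn : 0 < n) : a.natDegree < n := by
  refine lt_of_le_of_ne h fun he => ?_
  subst he
  have : a = 0 := by simpa using h0
  subst this
  simp at hn

/-- existence of a good generator -/
theorem exists_gen {k : Type*} [Field k] (E : IntermediateField k (RatFunc k)) (hE : E ≠ ⊥) :
    ∃ p q : k[X], q ≠ 0 ∧ IsCoprime p q ∧ q.natDegree < p.natDegree ∧
      E = IntermediateField.adjoin k {algebraMap k[X] (RatFunc k) p / algebraMap k[X] (RatFunc k) q} := by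
  have hf := RatFunc.Luroth.eq_adjoin_generator (E := E)
  have hC := RatFunc.Luroth.generator_ne_C hE
  generalize RatFunc.Luroth.generator E = f at hf hC
  have hb0 : f.denom ≠ 0 := f.denom_ne_zero
  have hcop : IsCoprime f.num f.denom := f.isCoprime_num_denom
  have hfab := f.num_div_denom
  generalize f.num = a at *
  generalize f.denom = b at *
  by_cases hlt : b.natDegree < a.natDegree
  · exact ⟨a, b, hb0, hcop, hlt, by rw [hfab]; exact hf⟩
  · push Not at hlt
    set l := a.coeff b.natDegree / b.leadingCoeff with hl
    have hlc : b.leadingCoeff ≠ 0 := by simpa using hb0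
    have hb' : algebraMap k[X] (RatFunc k) b ≠ 0 := by simpa using hb0
    have hCC : ∀ x : k, algebraMap k[X] (RatFunc k) (C x) = algebraMap k (RatFunc k) x :=
      fun x => rfl
    have hmap : algebraMap k[X] (RatFunc k) (a - C l * b) / algebraMap k[X] (RatFunc k) b =
        f - algebraMap k (RatFunc k) l := by
      rw [← hfab, map_sub, map_mul, hCC]; field_simp
    have hne : a - C l * b ≠ 0 := by
      intro h0
      apply hC
      refine ⟨l, ?_⟩
      rw [h0] at hmap
      simp at hmap
      exact (sub_eq_zero.mp hmap.symm)
    have hcoef : (a - C l * b).coeff b.natDegree = 0 := by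
      rw [coeff_sub, coeff_C_mul, hl, coeff_natDegree]; field_simp; simp
    have hbpos : 0 < b.natDegree := by
      by_contra h0
      have h0 : b.natDegree = 0 := by omega
      rw [h0] at hcoef
      have h1 : (a - C l * b).natDegree ≤ 0 := by
        refine (natDegree_sub_le _ _).trans (max_le (by omega) ?_)
        exact (natDegree_C_mul_le _ _).trans h0.le
      apply hne
      rw [eq_C_of_natDegree_le_zero h1, hcoef, C_0]
    refine ⟨b, a - C l * b, hne, ?_, ?_, ?_⟩
    · have := hcop.symm.add_mul_left_right (-C l)
      have h2 : a - C l * b = a + b * -C l := by ring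
      rw [h2]; exact this
    · refine natDegree_lt_of_le_of_coeff_ne_zero' ?_ hcoef hbpos
      exact (natDegree_sub_le _ _).trans (max_le hlt (natDegree_C_mul_le _ _))
    · rw [hf]
      have hinv : algebraMap k[X] (RatFunc k) b / algebraMap k[X] (RatFunc k) (a - C l * b) =
        (f - algebraMap k (RatFunc k) l)⁻¹ := by rw [← hmap, inv_div]
      rw [hinv]
      apply le_antisymm
      · rw [IntermediateField.adjoin_simple_le_iff]
        have h1 := IntermediateField.mem_adjoin_simple_self k (f - algebraMap k (RatFunc k) l)⁻¹
        have h2 := add_mem (inv_mem h1) (IntermediateField.algebraMap_mem _ l)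
        simpa using h2
      · rw [IntermediateField.adjoin_simple_le_iff]
        exact inv_mem (sub_mem (IntermediateField.mem_adjoin_simple_self k f) (IntermediateField.algebraMap_mem _ l))

theorem exists_common {k : Type*} [Field k] (f : RatFunc k) (g : Fin 3 → k[X]) (i0 : Fin 3)
    (h0 : g i0 ≠ 0)
    (hg : ∀ i, algebraMap k[X] (RatFunc k) (g i) / algebraMap k[X] (RatFunc k) (g i0) ∈
      IntermediateField.adjoin k {f}) :
    ∃ h b : Fin 3 → k[X], ∑ i, b i * h i = 1 ∧ ∀ i j,
      algebraMap k[X] (RatFunc k) (g i) * aeval f (h j) =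
        algebraMap k[X] (RatFunc k) (g j) * aeval f (h i) := by
  have h0' : algebraMap k[X] (RatFunc k) (g i0) ≠ 0 := by simpa using h0
  have H : ∀ i, ∃ r s : k[X], aeval f s ≠ 0 ∧
      algebraMap k[X] (RatFunc k) (g i) * aeval f s =
        algebraMap k[X] (RatFunc k) (g i0) * aeval f r := by
    intro i
    obtain ⟨r, s, hrs⟩ := (IntermediateField.mem_adjoin_simple_iff k _).mp (hg i)
    by_cases hs : aeval f s = 0
    · refine ⟨0, 1, by simp, ?_⟩
      rw [hs, div_zero, div_eq_zero_iff] at hrs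
      rcases hrs with hrs | hrs
      · simp [hrs]
      · exact absurd hrs h0'
    · refine ⟨r, s, hs, ?_⟩
      rw [div_eq_div_iff h0' hs] at hrs
      rw [hrs]; ring
  choose r s hs hrs using H
  let D : k[X] := ∏ j, s j
  let H : Fin 3 → k[X] := fun i => r i * ∏ j ∈ Finset.univ.erase i, s j
  have hD : aeval f D ≠ 0 := by
    rw [map_prod]; exact Finset.prod_ne_zero_iff.mpr fun i _ => hs i
  have hH : ∀ i, algebraMap k[X] (RatFunc k) (g i) * aeval f D =
        algebraMap k[X] (RatFunc k) (g i0) * aeval f (H i) := by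
    intro i
    have : D = s i * ∏ j ∈ Finset.univ.erase i, s j :=
      (Finset.mul_prod_erase _ _ (Finset.mem_univ i)).symm
    rw [this, map_mul, map_mul, ← mul_assoc, hrs, mul_assoc]
  obtain ⟨d, hd⟩ := (IsPrincipalIdealRing.principal (Ideal.span (Set.range H))).principal
  have hd1 : ∀ i, ∃ h, H i = d * h := by
    intro i
    have : H i ∈ Ideal.span {d} := by
      have h2 : H i ∈ Ideal.span (Set.range H) := Ideal.subset_span ⟨i, rfl⟩
      rw [hd] at h2; exact h2
    exact Ideal.mem_span_singleton.mp this
  choose h hh using hd1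
  have hd2 : d ∈ Ideal.span (Set.range H) := by
    rw [hd]; exact Ideal.mem_span_singleton_self d
  obtain ⟨b, hb⟩ := (Ideal.mem_span_range_iff_exists_fun).mp hd2
  have haH : aeval f (H i0) ≠ 0 := by
    intro h1
    have := hH i0
    rw [h1, mul_zero] at this
    exact (mul_ne_zero h0' hD) this
  have hda : aeval f d ≠ 0 := by
    intro h1
    apply haH
    rw [hh, map_mul, h1, zero_mul]
  have hd0 : d ≠ 0 := by rintro rfl; simp at hda
  refine ⟨h, b, ?_, ?_⟩
  · apply mul_left_cancel₀ hd0
    rw [mul_one, Finset.mul_sum]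
    conv_rhs => rw [← hb]
    refine Finset.sum_congr rfl fun i _ => ?_
    rw [hh]; ring
  · intro i j
    have hi := hH i
    have hj := hH j
    rw [hh, map_mul] at hi hj
    apply mul_left_cancel₀ (mul_ne_zero h0' hda)
    have e1 := congrArg (algebraMap k[X] (RatFunc k) (g i) * ·) hj
    have e2 := congrArg (algebraMap k[X] (RatFunc k) (g j) * ·) hi
    linear_combination e2 - e1

theorem exists_scale {k : Type*} [Field k] (p q : k[X]) (hq : q ≠ 0) (hpq : IsCoprime p q)
    (g a h b : Fin 3 → k[X]) (ha : ∑ i, a i * g i = 1) (hb : ∑ i, b i * h i = 1)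
    (hgh : ∀ i j, 
      algebraMap k[X] (RatFunc k) (g i) * aeval (algebraMap k[X] (RatFunc k) p / algebraMap k[X] (RatFunc k) q) (h j) =
        algebraMap k[X] (RatFunc k) (g j) * aeval (algebraMap k[X] (RatFunc k) p / algebraMap k[X] (RatFunc k) q) (h i))
    (e : ℕ) (he : ∀ i, (h i).natDegree ≤ e) (i1 : Fin 3) (hi1 : (h i1).coeff e ≠ 0) :
    ∃ s : k[X], IsUnit s ∧ ∀ i, hom2 p q e (h i) = s * g i := by
  have hw : ∀ i j, g i * hom2 p q e (h j) = g j * hom2 p q e (h i) := by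
    intro i j
    apply IsFractionRing.injective k[X] (RatFunc k)
    rw [RingHom.map_mul, RingHom.map_mul, hom2_map p q hq _ _ (he _), hom2_map p q hq _ _ (he _)]
    linear_combination (algebraMap k[X] (RatFunc k) q)^e * hgh i j
  have hs : ∀ j, hom2 p q e (h j) = (∑ i, a i * hom2 p q e (h i)) * g j := by
    intro j
    calc hom2 p q e (h j) = (∑ i, a i * g i) * hom2 p q e (h j) := by rw [ha, one_mul]
      _ = _ := by
        rw [Finset.sum_mul, Finset.sum_mul]
        refine Finset.sum_congr rfl fun i _ => ?_
        rw [mul_assoc, hw, mul_assoc, mul_comm (g j)]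
  refine ⟨_, ?_, hs⟩
  set s := ∑ i, a i * hom2 p q e (h i)
  have hsd : ∀ j, s ∣ hom2 p q e (h j) := fun j => ⟨_, hs j⟩
  -- `s` divides a power of `q`
  have h1 : ∃ N, s ∣ q ^ N := by
    obtain ⟨N, hN⟩ : ∃ N, ∀ i, (b i).natDegree ≤ N :=
      ⟨Finset.univ.sup fun i => (b i).natDegree, fun i => Finset.le_sup (f := fun i => (b i).natDegree) (Finset.mem_univ i)⟩
    refine ⟨N + e, ?_⟩
    have : q ^ (N+e) = ∑ i, hom2 p q N (b i) * hom2 p q e (h i) := by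
      have h2 : hom2 p q (N+e) 1 = q ^ (N+e) := by
        rw [hom2_apply, Finset.sum_eq_single 0]
        · simp
        · intro j _ hj; simp [coeff_one, hj]
        · simp
      rw [← h2, ← hb, map_sum]
      exact Finset.sum_congr rfl fun i _ => hom2_mul p q hq _ _ _ _ (hN i) (he i)
    rw [this]
    exact Finset.dvd_sum fun i _ => (hsd i).mul_left _
  obtain ⟨N, hN⟩ := h1
  have h2 : ∃ u, hom2 p q e (h i1) = C ((h i1).coeff e) * p ^ e + q * u := by
    refine ⟨∑ j ∈ Finset.range e, C ((h i1).coeff j) * (p^j * q^(e-j-1)), ?_⟩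
    rw [hom2_apply, Finset.sum_range_succ, add_comm, Finset.mul_sum]
    congr 1
    · simp
    · refine Finset.sum_congr rfl fun j hj => ?_
      have hj : j < e := by simpa using hj
      obtain ⟨i, rfl⟩ := Nat.exists_eq_add_of_lt hj
      rw [show j + i + 1 - j = i + 1 by omega, Nat.add_sub_cancel]
      ring
  obtain ⟨u, hu⟩ := h2
  have hcop : IsCoprime (hom2 p q e (h i1)) q := by
    rw [hu]
    refine IsCoprime.add_mul_left_left ?_ u
    exact (isCoprime_mul_unit_left_left (isUnit_C.mpr (IsUnit.mk0 _ hi1)) _ _).mpr hpq.pow_left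
  have hcop2 : IsCoprime s (q ^ N) := (hcop.of_isCoprime_of_dvd_left (hsd i1)).pow_right
  exact hcop2.isUnit_of_dvd hN

theorem core {k : Type*} [Field k] (c : ℕ) (hc : 0 < c) (A B g a : Fin 3 → k[X])
    (hA : ∀ i, (A i).natDegree ≤ c) (hB : ∀ i, (B i).natDegree ≤ c)
    (g0 : g 0 = A 1 * B 2 - A 2 * B 1) (g1 : g 1 = A 2 * B 0 - A 0 * B 2)
    (g2 : g 2 = A 0 * B 1 - A 1 * B 0) (ha : ∑ i, a i * g i = 1)
    (i0 : Fin 3) (hi0 : (g i0).coeff (2 * c) ≠ 0)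
    (hX : ∃ i, A i = X + 1 ∨ B i = X + 1)
    (hspan : ∀ p q : k[X], ¬ ∀ i, A i ∈ Submodule.span k {p, q} ∧ B i ∈ Submodule.span k {p, q}) :
    IntermediateField.adjoin k (Set.range fun i =>
      algebraMap k[X] (RatFunc k) (g i) / algebraMap k[X] (RatFunc k) (g i0)) = ⊤ := by
  set E := IntermediateField.adjoin k (Set.range fun i =>
      algebraMap k[X] (RatFunc k) (g i) / algebraMap k[X] (RatFunc k) (g i0)) with hEdef
  have hgE : ∀ i, algebraMap k[X] (RatFunc k) (g i) / algebraMap k[X] (RatFunc k) (g i0) ∈ E :=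
    fun i => IntermediateField.subset_adjoin _ _ ⟨i, rfl⟩
  have hgi0 : g i0 ≠ 0 := by intro h; simp [h] at hi0
  have hgi0' : algebraMap k[X] (RatFunc k) (g i0) ≠ 0 := by simpa using hgi0
  have hdegg : 2 * c ≤ (g i0).natDegree := le_natDegree_of_ne_zero hi0
  have hg : ∀ i, (g i).natDegree ≤ 2 * c := by
    have key : ∀ u v w z : k[X], u.natDegree ≤ c → v.natDegree ≤ c → w.natDegree ≤ c →
        z.natDegree ≤ c → (u * v - w * z).natDegree ≤ 2 * c := by
      intro u v w z hu hv hw hz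
      refine (natDegree_sub_le _ _).trans (max_le ?_ ?_) <;>
      exact natDegree_mul_le.trans (by omega)
    intro i
    fin_cases i
    · simpa [g0] using key _ _ _ _ (hA 1) (hB 2) (hA 2) (hB 1)
    · simpa [g1] using key _ _ _ _ (hA 2) (hB 0) (hA 0) (hB 2)
    · simpa [g2] using key _ _ _ _ (hA 0) (hB 1) (hA 1) (hB 0)
  have hEbot : E ≠ ⊥ := by
    intro hE
    have h1 : ∀ i, ∃ x : k, g i = C x * g i0 := by
      intro i
      have := hgE i
      rw [hE, IntermediateField.mem_bot] at this
      obtain ⟨x, hx⟩ := this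
      refine ⟨x, ?_⟩
      apply IsFractionRing.injective k[X] (RatFunc k)
      rw [map_mul]
      rw [eq_div_iff hgi0'] at hx
      exact hx.symm
    choose x hx using h1
    have : IsUnit (g i0) := by
      refine IsUnit.of_mul_eq_one (∑ i, a i * C (x i)) ?_
      rw [← ha, Finset.mul_sum]
      refine Finset.sum_congr rfl fun i _ => ?_
      conv_rhs => rw [hx i]
      ring
    have := natDegree_eq_zero_of_isUnit this
    omega
  obtain ⟨p, q, hq, hpq, hlt, hEpq⟩ := exists_gen E hEbot
  -- reduce to `p` being of degree at most one
  suffices hr : p.natDegree ≤ 1 by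
    have hq0 : q.natDegree = 0 := by omega
    have hp1 : p.natDegree = 1 := by omega
    obtain ⟨y, hy⟩ := natDegree_eq_zero.mp hq0
    have hy0 : y ≠ 0 := by rintro rfl; simp at hy; exact hq hy.symm
    have hp := p.as_sum_range_C_mul_X_pow
    rw [hp1] at hp
    simp [Finset.sum_range_succ] at hp
    have hc1 : p.coeff 1 ≠ 0 := by
      intro h; 
      have : p.leadingCoeff = 0 := by rw [leadingCoeff, hp1, h]
      simp at this; simp [this] at hp1
    have hX' : (RatFunc.X : RatFunc k) ∈ E := by
      have hm : algebraMap k[X] (RatFunc k) p / algebraMap k[X] (RatFunc k) q ∈ E := by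
        rw [hEpq]; exact IntermediateField.mem_adjoin_simple_self k _
      have hCC : ∀ x : k, algebraMap k[X] (RatFunc k) (C x) = algebraMap k (RatFunc k) x :=
        fun x => rfl
      have hpm : algebraMap k[X] (RatFunc k) p = algebraMap k (RatFunc k) (p.coeff 0) +
          algebraMap k (RatFunc k) (p.coeff 1) * RatFunc.X := by
        conv_lhs => rw [hp]
        rw [map_add, map_mul, hCC, hCC, RatFunc.algebraMap_X]
      have hc1' : algebraMap k (RatFunc k) (p.coeff 1) ≠ 0 := by simpa using hc1
      have hy' : algebraMap k (RatFunc k) y ≠ 0 := by simpa using hy0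
      have : (RatFunc.X : RatFunc k) = (algebraMap k[X] (RatFunc k) p / algebraMap k[X] (RatFunc k) q * algebraMap k (RatFunc k) y - algebraMap k (RatFunc k) (p.coeff 0)) / algebraMap k (RatFunc k) (p.coeff 1) := by
        rw [← hy, hCC, hpm]; field_simp; ring
      rw [this]
      exact div_mem (sub_mem (mul_mem hm (E.algebraMap_mem _)) (E.algebraMap_mem _)) (E.algebraMap_mem _)
    rw [eq_top_iff, ← RatFunc.adjoin_X, IntermediateField.adjoin_simple_le_iff]
    exact hX'
  obtain ⟨h, b, hb, hgh⟩ := exists_common _ g i0 hgi0 (fun i => hEpq ▸ hgE i)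
  obtain ⟨i1, hi1⟩ := Finite.exists_max (fun i => (h i).degree)
  have hi1ne : h i1 ≠ 0 := by
    intro h0
    have : ∀ i, h i = 0 := by
      intro i
      have := hi1 i
      rw [h0, degree_zero] at this
      exact degree_eq_bot.mp (le_bot_iff.mp this)
    simp [this] at hb
  set e := (h i1).natDegree with he_def
  have he : ∀ i, (h i).natDegree ≤ e := fun i => natDegree_le_natDegree (hi1 i)
  obtain ⟨s, hsu, hs⟩ := exists_scale p q hq hpq g a h b ha hb hgh e he i1 (by simpa [he_def] using hi1ne)
  set r := p.natDegree with hr_def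
  have her : e * r ≤ 2 * c := by
    have h1 := hom2_degree p q hq hlt e (h i1) hi1ne le_rfl
    have h2 := natDegree_eq_of_degree_eq_some h1
    rw [hs, ← he_def, ← hr_def] at h2
    have h3 : (s * g i1).natDegree ≤ 2 * c := by
      refine natDegree_mul_le.trans ?_
      rw [natDegree_eq_zero_of_isUnit hsu, zero_add]
      exact hg i1
    simp at h2
    omega
  obtain ⟨m, hm⟩ : ∃ m, m = e / 2 := ⟨_, rfl⟩
  -- the pulled back syzygies
  have hsyz : ∀ t : Fin 3 → k[X], (∀ i, (t i).natDegree ≤ m) → ∑ i, t i * h i = 0 →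
      ∑ i, hom2 p q m (t i) * g i = 0 := by
    intro t ht hth
    apply hsu.mul_left_cancel
    rw [mul_zero, Finset.mul_sum]
    have := congrArg (hom2 p q (m + e)) hth
    rw [map_sum, map_zero] at this
    rw [← this]
    refine Finset.sum_congr rfl fun i _ => ?_
    rw [hom2_mul p q hq _ _ _ _ (ht i) (he i), hs]; ring
  let α : (Fin 3 → k[X]) →ₗ[k] k[X] :=
    { toFun := fun s => (a 0 * (s 1 * B 2 - s 2 * B 1) + a 1 * (s 2 * B 0 - s 0 * B 2) + a 2 * (s 0 * B 1 - s 1 * B 0))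
      map_add' := fun s t => by simp only [Pi.add_apply]; ring
      map_smul' := fun x s => by simp only [Pi.smul_apply, smul_eq_C_mul, RingHom.id_apply]; ring }
  let β : (Fin 3 → k[X]) →ₗ[k] k[X] :=
    { toFun := fun s => (a 0 * (A 1 * s 2 - A 2 * s 1) + a 1 * (A 2 * s 0 - A 0 * s 2) + a 2 * (A 0 * s 1 - A 1 * s 0))
      map_add' := fun s t => by simp only [Pi.add_apply]; ring
      map_smul' := fun x s => by simp only [Pi.smul_apply, smul_eq_C_mul, RingHom.id_apply]; ring }
  have hαβ : ∀ s : Fin 3 → k[X], ∑ i, s i * g i = 0 → ∀ i, s i = α s * A i + β s * B i :=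
    fun s hs i => syz A B s a g g0 g1 g2 ha hs i
  have hdeg : ∀ s : Fin 3 → k[X], ∑ i, s i * g i = 0 → ∀ n, (∀ i, (s i).natDegree ≤ n) →
      n ≤ c → (α s).natDegree ≤ 0 ∧ (β s).natDegree ≤ 0 ∧ (n < c → α s = 0 ∧ β s = 0) := by
    intro s hs n hn hnc
    have hst := hαβ s hs
    have key : ∀ u v w z : k[X], u.natDegree ≤ n → v.natDegree ≤ c → w.natDegree ≤ n →
        z.natDegree ≤ c → (u * v - w * z).natDegree ≤ n + c := by
      intro u v w z hu hv hw hz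
      refine (natDegree_sub_le _ _).trans (max_le ?_ ?_) <;>
      exact natDegree_mul_le.trans (by omega)
    have hα : (α s * g i0).natDegree ≤ n + c := by
      have : ∀ i, (α s * g i).natDegree ≤ n + c := by
        intro i
        fin_cases i
        · have e1 : α s * g 0 = s 1 * B 2 - s 2 * B 1 := by
            rw [g0, hst 1, hst 2]; ring
          simpa [e1] using key _ _ _ _ (hn 1) (hB 2) (hn 2) (hB 1)
        · have e1 : α s * g 1 = s 2 * B 0 - s 0 * B 2 := by
            rw [g1, hst 0, hst 2]; ring
          simpa [e1] using key _ _ _ _ (hn 2) (hB 0) (hn 0) (hB 2)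
        · have e1 : α s * g 2 = s 0 * B 1 - s 1 * B 0 := by
            rw [g2, hst 0, hst 1]; ring
          simpa [e1] using key _ _ _ _ (hn 0) (hB 1) (hn 1) (hB 0)
      exact this i0
    have hβ : (β s * g i0).natDegree ≤ n + c := by
      have : ∀ i, (β s * g i).natDegree ≤ n + c := by
        intro i
        fin_cases i
        · have e1 : β s * g 0 = s 2 * A 1 - s 1 * A 2 := by
            rw [g0, hst 1, hst 2]; ring
          simpa [e1] using key _ _ _ _ (hn 2) (hA 1) (hn 1) (hA 2)
        · have e1 : β s * g 1 = s 0 * A 2 - s 2 * A 0 := by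
            rw [g1, hst 0, hst 2]; ring
          simpa [e1] using key _ _ _ _ (hn 0) (hA 2) (hn 2) (hA 0)
        · have e1 : β s * g 2 = s 1 * A 0 - s 0 * A 1 := by
            rw [g2, hst 0, hst 1]; ring
          simpa [e1] using key _ _ _ _ (hn 1) (hA 0) (hn 0) (hA 1)
      exact this i0
    have fin : ∀ u : k[X], (u * g i0).natDegree ≤ n + c → u.natDegree ≤ 0 ∧ (n < c → u = 0) := by
      intro u hu
      by_cases hu0 : u = 0
      · simp [hu0]
      · rw [natDegree_mul hu0 hgi0] at hu
        refine ⟨by omega, fun h => by omega⟩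
    exact ⟨(fin _ hα).1, (fin _ hβ).1, fun h => ⟨(fin _ hα).2 h, (fin _ hβ).2 h⟩⟩
  have hmr : m * r ≤ c := by
    have h1 : 2 * m ≤ e := by omega
    have h2 := Nat.mul_le_mul_right r h1
    rw [mul_assoc] at h2
    omega
  -- the linear map whose kernel consists of the syzygies
  let Ψ : (Fin 3 → degreeLT k (m+1)) →ₗ[k] degreeLT k (e + m + 1) :=
    LinearMap.codRestrict _
      (∑ i, (LinearMap.mulRight k (h i)) ∘ₗ (degreeLT k (m+1)).subtype ∘ₗ LinearMap.proj i)
      (by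
        intro t
        have ht : ∀ i, (t i : k[X]) * h i ∈ degreeLT k (e + m + 1) := by
          intro i
          rw [mem_degreeLT]
          have h1 := mem_degreeLT.mp (t i).2
          by_cases h0 : (t i : k[X]) * h i = 0
          · rw [h0, degree_zero]; exact WithBot.bot_lt_coe _
          · rw [← natDegree_lt_iff_degree_lt h0]
            have h2 : (t i : k[X]) ≠ 0 := left_ne_zero_of_mul h0
            rw [← natDegree_lt_iff_degree_lt h2] at h1
            have := he i
            exact natDegree_mul_le.trans_lt (by omega)
        simpa [LinearMap.sum_apply] using Submodule.sum_mem _ fun i _ => ht i)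
  have hΨ : ∀ t, (Ψ t : k[X]) = ∑ i, (t i : k[X]) * h i := by
    intro t; simp [Ψ, LinearMap.sum_apply]
  have hfr : ∀ n, Module.finrank k (degreeLT k n) = n := by
    intro n
    rw [(degreeLTEquiv k n).finrank_eq]; simp
  have : ∀ n, FiniteDimensional k (degreeLT k n) := fun n =>
    Module.Finite.equiv (degreeLTEquiv k n).symm
  have hrank : 3 * (m + 1) ≤ Module.finrank k (LinearMap.ker Ψ) + (e + m + 1) := by
    have h1 := LinearMap.finrank_range_add_finrank_ker Ψ
    have h2 : Module.finrank k (LinearMap.range Ψ) ≤ e + m + 1 := by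
      simpa [hfr] using Submodule.finrank_le (LinearMap.range Ψ)
    have h3 : Module.finrank k (Fin 3 → degreeLT k (m+1)) = 3 * (m+1) := by
      rw [Module.finrank_pi_fintype]; simp [hfr]
    omega
  let hl : LinearMap.ker Ψ →ₗ[k] (Fin 3 → k[X]) :=
    LinearMap.pi fun i => hom2 p q m ∘ₗ (degreeLT k (m+1)).subtype ∘ₗ LinearMap.proj i ∘ₗ
      (LinearMap.ker Ψ).subtype
  have hhl : ∀ t i, hl t i = hom2 p q m ((t : Fin 3 → degreeLT k (m+1)) i : k[X]) := fun t i => rfl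
  have hnd : ∀ (t : LinearMap.ker Ψ) i, ((t : Fin 3 → degreeLT k (m+1)) i : k[X]).natDegree ≤ m := by
    intro t i
    have := mem_degreeLT.mp (t.1 i).2
    by_cases h0 : (t.1 i : k[X]) = 0
    · rw [h0, natDegree_zero]; exact Nat.zero_le _
    · rw [← natDegree_lt_iff_degree_lt h0] at this
      exact Nat.lt_succ_iff.mp this
  have hlsyz : ∀ t, ∑ i, hl t i * g i = 0 := by
    intro t
    apply hsyz _ (hnd t)
    rw [← hΨ]
    have := t.2
    rw [LinearMap.mem_ker] at this
    rw [this]; rfl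
  have hldeg : ∀ t i, (hl t i).natDegree ≤ m * r := fun t i => hom2_natDegree_le p q hlt.le m _
  have hinj : ∀ t, hl t = 0 → t = 0 := by
    intro t ht
    ext1; funext i; ext1
    by_contra h0
    have h1 := hom2_degree p q hq hlt m _ h0 (hnd t i)
    have h2 := congrFun ht i
    rw [hhl] at h2
    rw [h2, Pi.zero_apply, degree_zero] at h1
    exact WithBot.bot_ne_coe h1
  let T : LinearMap.ker Ψ →ₗ[k] (Fin 2 → k) :=
    LinearMap.pi ![lcoeff k 0 ∘ₗ α ∘ₗ hl, lcoeff k 0 ∘ₗ β ∘ₗ hl]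
  have hT0 : ∀ t, T t 0 = (α (hl t)).coeff 0 := fun t => rfl
  have hT1 : ∀ t, T t 1 = (β (hl t)).coeff 0 := fun t => rfl
  have hrep : ∀ t i, hl t i = C (T t 0) * A i + C (T t 1) * B i := by
    intro t i
    obtain ⟨h1, h2, -⟩ := hdeg _ (hlsyz t) _ (hldeg t) hmr
    rw [hT0, hT1, ← eq_C_of_natDegree_le_zero h1, ← eq_C_of_natDegree_le_zero h2]
    exact hαβ _ (hlsyz t) i
  have hTinj : Function.Injective T := by
    rw [injective_iff_map_eq_zero]
    intro t ht
    apply hinj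
    funext i
    rw [hrep, ht]; simp
  have hmrc : m * r = c := by
    refine le_antisymm hmr (not_lt.mp fun hlt' => ?_)
    have hz : ∀ t : LinearMap.ker Ψ, t = 0 := by
      intro t
      apply hinj
      obtain ⟨-, -, h3⟩ := hdeg _ (hlsyz t) _ (hldeg t) hmr
      funext i
      rw [hαβ _ (hlsyz t) i, (h3 hlt').1, (h3 hlt').2]; simp
    have : Subsingleton (LinearMap.ker Ψ) := ⟨fun x y => by rw [hz x, hz y]⟩
    have := Module.finrank_zero_of_subsingleton (R := k) (M := LinearMap.ker Ψ)
    omega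
  have hrpos : 0 < r := by omega
  have he2 : e ≤ 2 * m := by
    rw [← hmrc, ← mul_assoc] at her
    exact Nat.le_of_mul_le_mul_right her hrpos
  have hTsurj : Function.Surjective T := by
    have h1 := LinearMap.finrank_range_of_inj hTinj
    rw [← LinearMap.range_eq_top]
    apply Submodule.eq_top_of_finrank_eq
    have h2 := Submodule.finrank_le (LinearMap.range T)
    have h3 : Module.finrank k (Fin 2 → k) = 2 := by simp
    omega
  have hfinal : ∀ i, (∃ P : k[X], P.natDegree ≤ m ∧ A i = hom2 p q m P) ∧
      (∃ P : k[X], P.natDegree ≤ m ∧ B i = hom2 p q m P) := by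
    intro i
    constructor
    · obtain ⟨t, ht⟩ := hTsurj ![1, 0]
      refine ⟨_, hnd t i, ?_⟩
      rw [← hhl, hrep, ht]; simp
    · obtain ⟨t, ht⟩ := hTsurj ![0, 1]
      refine ⟨_, hnd t i, ?_⟩
      rw [← hhl, hrep, ht]; simp
  have hm2 : m ≠ 1 := by
    intro hm1
    apply hspan p q
    have h1 : ∀ P : k[X], hom2 p q m P ∈ Submodule.span k {p, q} := by
      intro P
      rw [hom2_apply, hm1]
      simp only [Finset.sum_range_succ, Finset.sum_range_zero]
      rw [Submodule.mem_span_pair]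
      exact ⟨P.coeff 1, P.coeff 0, by simp [smul_eq_C_mul]; ring⟩
    intro i
    obtain ⟨⟨P, -, hP⟩, ⟨Q, -, hQ⟩⟩ := hfinal i
    rw [hP, hQ]
    exact ⟨h1 P, h1 Q⟩
  have hX2 : ∃ P : k[X], P.natDegree ≤ m ∧ X + 1 = hom2 p q m P := by
    obtain ⟨i, hi | hi⟩ := hX
    · rw [← hi]; exact (hfinal i).1
    · rw [← hi]; exact (hfinal i).2
  obtain ⟨P, hPm, hP⟩ := hX2
  have hXd : (X + 1 : k[X]).natDegree = 1 := natDegree_X_add_C 1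
  have hP0 : P ≠ 0 := by
    rintro rfl
    rw [hP] at hXd
    simp at hXd
  have h1 := natDegree_eq_of_degree_eq_some (hom2_degree p q hq hlt m P hP0 hPm)
  rw [← hP, hXd, ← hr_def] at h1
  rcases Nat.eq_zero_or_pos P.natDegree with h0 | h0
  · rw [h0] at h1
    simp at h1
    exact absurd (Nat.eq_one_of_mul_eq_one_right h1.symm) hm2
  · have := Nat.mul_le_mul_right r h0
    omega

end Polynomial

theorem delta_natDegree_le {k : Type*} [Field k] {n : ℕ} {v : MvPolynomial (Fin 2) k}
    (hv : v.IsHomogeneous n) :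
    (MvPolynomial.aeval ![Polynomial.X, (1 : Polynomial k)] v).natDegree ≤ n := by
  rw [MvPolynomial.aeval_def, MvPolynomial.eval₂_eq']
  refine Polynomial.natDegree_sum_le_of_forall_le _ _ fun s hs => ?_
  have h1 := hv (MvPolynomial.mem_support_iff.mp hs)
  rw [Finsupp.weight_apply, Finsupp.sum_fintype _ _ (by simp)] at h1
  simp [Fin.prod_univ_two] at h1 ⊢
  refine (Polynomial.natDegree_C_mul_le _ _).trans ?_
  simp; omega

theorem delta_ratio {k L : Type*} [Field k] [Field L] [Algebra k L] {n : ℕ}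
    {v : MvPolynomial (Fin 2) k} (hv : v.IsHomogeneous n) (x y : L) (hy : y ≠ 0) :
    Polynomial.aeval (x / y) (MvPolynomial.aeval ![Polynomial.X, (1 : Polynomial k)] v) * y ^ n =
      MvPolynomial.aeval ![x, y] v := by
  rw [MvPolynomial.aeval_def, MvPolynomial.eval₂_eq', MvPolynomial.aeval_def,
    MvPolynomial.eval₂_eq', map_sum, Finset.sum_mul]
  refine Finset.sum_congr rfl fun s hs => ?_
  have h1 := hv (MvPolynomial.mem_support_iff.mp hs)
  rw [Finsupp.weight_apply, Finsupp.sum_fintype _ _ (by simp)] at h1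
  simp [Fin.prod_univ_two] at h1 ⊢
  rw [← h1, div_pow, pow_add]
  field_simp

theorem not_unit_dvd {R : Type*} [CommRing R] [IsNoetherianRing R] (I : Ideal R) (F : R)
    (hF : ¬ IsUnit F) (hI : I ≤ Ideal.span {F}) (h : idealHeight I = 2) : False := by
  have hne : Ideal.span {F} ≠ ⊤ := by rwa [Ne, Ideal.span_singleton_eq_top]
  obtain ⟨P, hP⟩ := Ideal.nonempty_minimalPrimes hne
  have hprime : P.IsPrime := hP.1.1
  have h1 := Ideal.height_le_one_of_isPrincipal_of_mem_minimalPrimes (Ideal.span {F}) P hP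
  have h1 : Order.height (⟨P, hprime⟩ : PrimeSpectrum R) ≤ 1 := by
    rw [← PrimeSpectrum.height_eq_orderHeight]; exact h1
  have h2 : idealHeight I ≤ Order.height (⟨P, hprime⟩ : PrimeSpectrum R) :=
    iInf₂_le (⟨P, hprime⟩ : PrimeSpectrum R) (hI.trans hP.1.2)
  have h3 : idealHeight I ≤ 1 := h2.trans h1
  rw [h] at h3
  exact absurd h3 (by decide)

theorem field_step {k : Type*} [Field k] (n : ℕ) (g : Fin 3 → MvPolynomial (Fin 2) k)
    (hg : ∀ i, (g i).IsHomogeneous n) (i0 : Fin 3) (hi0 : g i0 ≠ 0)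
    (htop : IntermediateField.adjoin k (Set.range fun i =>
      algebraMap (Polynomial k) (RatFunc k) (aeval ![Polynomial.X, (1 : Polynomial k)] (g i)) /
        algebraMap (Polynomial k) (RatFunc k) (aeval ![Polynomial.X, (1 : Polynomial k)] (g i0))) = ⊤) :
    ∀ v ∈ Algebra.adjoin k {f : MvPolynomial (Fin 2) k | f.IsHomogeneous n},
      ∃ a ∈ Algebra.adjoin k (Set.range g), ∃ b ∈ Algebra.adjoin k (Set.range g),
        b ≠ 0 ∧ b * v = a := by
  let L := FractionRing (MvPolynomial (Fin 2) k)
  let ι : MvPolynomial (Fin 2) k →ₐ[k] L := IsScalarTower.toAlgHom k (MvPolynomial (Fin 2) k) L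
  have hι : Function.Injective ι := IsFractionRing.injective (MvPolynomial (Fin 2) k) L
  let x : L := ι (X 0)
  let y : L := ι (X 1)
  have hy : y ≠ 0 := by
    intro h
    have : ι (X 1) = ι 0 := by rw [map_zero]; exact h
    exact X_ne_zero _ (hι this)
  have hιa : ∀ v, aeval ![x, y] v = ι v := by
    intro v
    have : (aeval ![x, y] : MvPolynomial (Fin 2) k →ₐ[k] L) = ι := by
      apply MvPolynomial.algHom_ext
      intro i; fin_cases i <;> simp [x, y]
    rw [this]
  have hinj : Function.Injective (Polynomial.aeval (x / y) : Polynomial k →ₐ[k] L) := by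
    rw [injective_iff_map_eq_zero]
    intro P hP
    have h1 := delta_ratio (Polynomial.isHomogeneous_homogenize (n := P.natDegree) P) x y hy
    rw [Polynomial.aeval_homogenize_X_one P le_rfl, hP, zero_mul, hιa] at h1
    have h2 : P.homogenize P.natDegree = 0 := hι (by rw [← h1, map_zero])
    exact Polynomial.eq_zero_of_homogenize_eq_zero le_rfl h2
  let σ : RatFunc k →ₐ[k] L := RatFunc.liftAlgHom (Polynomial.aeval (x / y))
    (nonZeroDivisors_le_comap_nonZeroDivisors_of_injective _ hinj)
  have hσ : ∀ P : Polynomial k, σ (algebraMap (Polynomial k) (RatFunc k) P) = Polynomial.aeval (x/y) P := by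
    intro P
    have h1 := RatFunc.liftAlgHom_apply_div (Polynomial.aeval (x / y))
      (nonZeroDivisors_le_comap_nonZeroDivisors_of_injective _ hinj) P 1
    rw [map_one, map_one, div_one, div_one] at h1
    exact h1
  have hσv : ∀ v : MvPolynomial (Fin 2) k, v.IsHomogeneous n →
      σ (algebraMap (Polynomial k) (RatFunc k) (aeval ![Polynomial.X, (1 : Polynomial k)] v)) =
        ι v / y ^ n := by
    intro v hv
    rw [hσ, eq_div_iff (pow_ne_zero _ hy), delta_ratio hv x y hy, hιa]
  have hyn : y ^ n ≠ 0 := pow_ne_zero _ hy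
  have hgi0 : ι (g i0) ≠ 0 := by
    intro h; exact hi0 (hι (by rw [h, map_zero]))
  let F : IntermediateField k L := IntermediateField.adjoin k (Set.range fun i => ι (g i))
  have hgF : ∀ i, ι (g i) ∈ F := fun i => IntermediateField.subset_adjoin _ _ ⟨i, rfl⟩
  have hle : (⊤ : IntermediateField k (RatFunc k)) ≤ F.comap σ := by
    rw [← htop, IntermediateField.adjoin_le_iff]
    rintro _ ⟨i, rfl⟩
    show σ _ ∈ F
    rw [map_div₀, hσv _ (hg i), hσv _ (hg i0), div_div_div_cancel_right₀ hyn]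
    exact div_mem (hgF i) (hgF i0)
  have hvF : ∀ v : MvPolynomial (Fin 2) k, v.IsHomogeneous n → ι v ∈ F := by
    intro v hv
    have h1 : σ (algebraMap (Polynomial k) (RatFunc k) (aeval ![Polynomial.X, (1 : Polynomial k)] v) / algebraMap (Polynomial k) (RatFunc k) (aeval ![Polynomial.X, (1 : Polynomial k)] (g i0))) ∈ F :=
      hle (x := algebraMap (Polynomial k) (RatFunc k) (aeval ![Polynomial.X, (1 : Polynomial k)] v) / algebraMap (Polynomial k) (RatFunc k) (aeval ![Polynomial.X, (1 : Polynomial k)] (g i0))) trivial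
    rw [map_div₀, hσv _ hv, hσv _ (hg i0), div_div_div_cancel_right₀ hyn] at h1
    have := mul_mem h1 (hgF i0)
    rwa [div_mul_cancel₀ _ hgi0] at this
  intro v hv
  have hv2 : ι v ∈ F := by
    have : Algebra.adjoin k {f : MvPolynomial (Fin 2) k | f.IsHomogeneous n} ≤
        F.toSubalgebra.comap ι := Algebra.adjoin_le fun f hf => hvF f hf
    exact this hv
  rw [IntermediateField.mem_adjoin_range_iff] at hv2
  obtain ⟨r, s, hrs⟩ := hv2
  have hco : ∀ r : MvPolynomial (Fin 3) k, aeval (fun i => ι (g i)) r = ι (aeval g r) := by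
    intro r
    have : (aeval (fun i => ι (g i)) : MvPolynomial (Fin 3) k →ₐ[k] L) = ι.comp (aeval g) := by
      apply MvPolynomial.algHom_ext
      intro i; simp
    rw [this]; rfl
  have hmem : ∀ r : MvPolynomial (Fin 3) k, aeval g r ∈ Algebra.adjoin k (Set.range g) := by
    intro r
    rw [Algebra.adjoin_range_eq_range_aeval]
    exact ⟨r, rfl⟩
  rw [hco, hco] at hrs
  by_cases hs : aeval g s = 0
  · refine ⟨0, zero_mem _, 1, one_mem _, one_ne_zero, ?_⟩
    rw [hs, map_zero, div_zero] at hrs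
    rw [one_mul]
    exact hι (by rw [hrs, map_zero])
  · refine ⟨_, hmem r, _, hmem s, hs, ?_⟩
    have hs' : ι (aeval g s) ≠ 0 := by
      intro h; exact hs (hι (by rw [h, map_zero]))
    apply hι
    rw [map_mul, hrs, mul_div_cancel₀ _ hs']

/-- Let `k` be an infinite field, `d = 2c`, and `φ` a `3 × 2` matrix of forms of degree `c` in
`B = k[x,y]` with `ht I₂(φ) = 2` and `μ(I₁(φ)) ≥ 3` (the entries span a `k`-space of dimension
at least `3`).  If two of the entries of `φ` are `x^c` and `y^{c-1}(x+y)`, then the morphism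
`ℙ¹ → ℙ²` given by the signed `2 × 2` minors `g₁, g₂, g₃` of `φ` is birational onto its image;
equivalently (as in the paper), the subrings `k[g₁,g₂,g₃] ⊆ k[B_d]` of `B` have the same
quotient field, i.e. every element of the `d`-th Veronese subring `k[B_d]` is a fraction of
elements of `k[g₁,g₂,g₃]`. -/
theorem stmt19 {k : Type*} [Field k] [Infinite k] (c : ℕ) (hc : 0 < c) (d : ℕ) (hd : d = 2 * c)
    (φ : Matrix (Fin 3) (Fin 2) (MvPolynomial (Fin 2) k))
    (hhom : ∀ i j, (φ i j).IsHomogeneous c)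
    (hht : idealHeight (Ideal.span
      {x : MvPolynomial (Fin 2) k | ∃ i₁ i₂ : Fin 3, x =
        φ i₁ 0 * φ i₂ 1 - φ i₂ 0 * φ i₁ 1}) = 2)
    (hmu : 3 ≤ Module.finrank k
      (Submodule.span k (Set.range fun p : Fin 3 × Fin 2 => φ p.1 p.2)))
    (hx : ∃ p : Fin 3 × Fin 2, φ p.1 p.2 = (X 0 : MvPolynomial (Fin 2) k) ^ c)
    (hy : ∃ p : Fin 3 × Fin 2, φ p.1 p.2 = (X 1 : MvPolynomial (Fin 2) k) ^ (c - 1) * (X 0 + X 1))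
    (hxy : ∀ p q : Fin 3 × Fin 2,
      φ p.1 p.2 = (X 0 : MvPolynomial (Fin 2) k) ^ c →
      φ q.1 q.2 = (X 1 : MvPolynomial (Fin 2) k) ^ (c - 1) * (X 0 + X 1) → p ≠ q) :
    let g : Fin 3 → MvPolynomial (Fin 2) k :=
      ![φ 1 0 * φ 2 1 - φ 2 0 * φ 1 1,
        -(φ 0 0 * φ 2 1 - φ 2 0 * φ 0 1),
        φ 0 0 * φ 1 1 - φ 1 0 * φ 0 1]
    ∀ v ∈ Algebra.adjoin k {f : MvPolynomial (Fin 2) k | f.IsHomogeneous d},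
      ∃ a ∈ Algebra.adjoin k (Set.range g), ∃ b ∈ Algebra.adjoin k (Set.range g),
        b ≠ 0 ∧ b * v = a := by
  intro g
  subst hd
  let A : Fin 3 → Polynomial k := fun i => aeval ![Polynomial.X, (1 : Polynomial k)] (φ i 0)
  let B : Fin 3 → Polynomial k := fun i => aeval ![Polynomial.X, (1 : Polynomial k)] (φ i 1)
  let G : Fin 3 → Polynomial k := fun i => aeval ![Polynomial.X, (1 : Polynomial k)] (g i)
  have hmul : ∀ i j, (φ i 0 * φ j 1).IsHomogeneous (2 * c) := by
    intro i j
    rw [two_mul]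
    exact (hhom i 0).mul (hhom j 1)
  have hg : ∀ i, (g i).IsHomogeneous (2 * c) := by
    intro i
    fin_cases i
    · exact (hmul 1 2).sub (hmul 2 1)
    · exact ((hmul 0 2).sub (hmul 2 0)).neg
    · exact (hmul 0 1).sub (hmul 1 0)
  -- all minors are multiples of any common divisor of `g`
  have hcommon : ∀ F : MvPolynomial (Fin 2) k, (∀ i, F ∣ g i) → IsUnit F := by
    intro F hF
    by_contra hun
    refine not_unit_dvd _ F hun ?_ hht
    rw [Ideal.span_le]
    rintro _ ⟨i, j, rfl⟩
    have h0 : F ∣ φ 1 0 * φ 2 1 - φ 2 0 * φ 1 1 := hF 0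
    have h1 : F ∣ φ 0 0 * φ 2 1 - φ 2 0 * φ 0 1 := (dvd_neg.mp (hF 1))
    have h2 : F ∣ φ 0 0 * φ 1 1 - φ 1 0 * φ 0 1 := hF 2
    have h0' := (dvd_neg.mpr h0)
    have h1' := (dvd_neg.mpr h1)
    have h2' := (dvd_neg.mpr h2)
    rw [neg_sub] at h0' h1' h2'
    rw [SetLike.mem_coe, Ideal.mem_span_singleton]
    fin_cases i <;> fin_cases j <;> simp <;> assumption
  have hGg : ∀ i, (G i).homogenize (2 * c) = g i := fun i =>
    Polynomial.homogenize_eq_of_isHomogeneous (hg i) rfl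
  have hGdeg : ∀ i, (G i).natDegree ≤ 2 * c := fun i => delta_natDegree_le (hg i)
  -- coprimality
  obtain ⟨a, ha⟩ : ∃ a : Fin 3 → Polynomial k, ∑ i, a i * G i = 1 := by
    obtain ⟨π, hπ⟩ := (IsPrincipalIdealRing.principal (Ideal.span (Set.range G))).principal
    have hπd : ∀ i, π ∣ G i := by
      intro i
      have h2 : G i ∈ Ideal.span (Set.range G) := Ideal.subset_span ⟨i, rfl⟩
      rw [hπ] at h2
      exact Ideal.mem_span_singleton.mp h2
    have hdvd : ∀ i, π.homogenize π.natDegree ∣ g i := by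
      intro i
      obtain ⟨u, hu⟩ := hπd i
      by_cases h0 : G i = 0
      · rw [← hGg, h0, Polynomial.homogenize_zero]; exact dvd_zero _
      · have hne := h0
        rw [hu] at hne
        have h1 := Polynomial.natDegree_mul (left_ne_zero_of_mul hne) (right_ne_zero_of_mul hne)
        rw [← hu] at h1
        have h2 := hGdeg i
        have h3 := Polynomial.homogenize_mul π u (m := π.natDegree) (n := 2 * c - π.natDegree)
          le_rfl (by omega)
        rw [← hu, show π.natDegree + (2 * c - π.natDegree) = 2 * c by omega, hGg] at h3
        exact ⟨_, h3⟩
    have hu := (hcommon _ hdvd).map (aeval ![Polynomial.X, (1 : Polynomial k)])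
    rw [Polynomial.aeval_homogenize_X_one π le_rfl] at hu
    have h1 : (1 : Polynomial k) ∈ Ideal.span (Set.range G) := by
      rw [hπ]
      have := (Ideal.span_singleton_eq_top.mpr hu)
      change (1 : Polynomial k) ∈ Ideal.span {π}
      rw [this]; trivial
    exact (Ideal.mem_span_range_iff_exists_fun).mp h1
  -- coprimality at infinity
  obtain ⟨i0, hi0⟩ : ∃ i0, (G i0).coeff (2 * c) ≠ 0 := by
    by_contra hcon
    push Not at hcon
    have hdvd : ∀ i, (X 1 : MvPolynomial (Fin 2) k) ∣ g i := by
      intro i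
      have h1 : (G i).natDegree ≤ 2 * c - 1 := by
        have := Polynomial.natDegree_lt_of_le_of_coeff_ne_zero' (hGdeg i) (hcon i) (by omega)
        omega
      have h3 := Polynomial.homogenize_mul 1 (G i) (m := 1) (n := 2 * c - 1) (by simp) h1
      rw [one_mul, show 1 + (2 * c - 1) = 2 * c by omega, hGg] at h3
      rw [h3]
      simp
    have hX := (hcommon _ hdvd).map (aeval ![(1 : k), 0])
    simp at hX
  have hgi0 : g i0 ≠ 0 := by
    intro h; apply hi0; simp [G, h]
  refine field_step (2 * c) g hg i0 hgi0 ?_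
  refine Polynomial.core c hc A B G a (fun i => delta_natDegree_le (hhom i 0))
    (fun i => delta_natDegree_le (hhom i 1)) ?_ ?_ ?_ ha i0 hi0 ?_ ?_
  · simp [G, g, A, B]
  · simp [G, g, A, B]
  · simp [G, g, A, B]
  · obtain ⟨⟨i, j⟩, hp⟩ := hy
    refine ⟨i, ?_⟩
    have h1 := congrArg (aeval ![Polynomial.X, (1 : Polynomial k)]) hp
    simp at h1
    fin_cases j
    · exact Or.inl h1
    · exact Or.inr h1
  · intro p q hpq
    have h1 : ∀ i j, φ i j ∈ Submodule.span k {p.homogenize c, q.homogenize c} := by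
      have h2 : ∀ P ∈ Submodule.span k {p, q}, P.homogenize c ∈
          Submodule.span k {p.homogenize c, q.homogenize c} := by
        intro P hP
        obtain ⟨u, v, rfl⟩ := Submodule.mem_span_pair.mp hP
        rw [Submodule.mem_span_pair]
        exact ⟨u, v, by simp⟩
      intro i j
      have h3 : (aeval ![Polynomial.X, (1 : Polynomial k)] (φ i j)).homogenize c = φ i j :=
        Polynomial.homogenize_eq_of_isHomogeneous (hhom i j) rfl
      rw [← h3]
      apply h2
      fin_cases j
      · exact (hpq i).1
      · exact (hpq i).2
    have h4 : Submodule.span k (Set.range fun p : Fin 3 × Fin 2 => φ p.1 p.2) ≤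
        Submodule.span k {p.homogenize c, q.homogenize c} := by
      rw [Submodule.span_le]
      rintro _ ⟨⟨i, j⟩, rfl⟩
      exact h1 i j
    classical
    have h5 := finrank_span_finset_le_card (R := k)
      ({p.homogenize c, q.homogenize c} : Finset (MvPolynomial (Fin 2) k))
    have h6 : (({p.homogenize c, q.homogenize c} : Finset (MvPolynomial (Fin 2) k)) :
      Set (MvPolynomial (Fin 2) k)) = {p.homogenize c, q.homogenize c} := by simp
    have h7 : ({p.homogenize c, q.homogenize c} : Finset (MvPolynomial (Fin 2) k)).card ≤ 2 :=
      Finset.card_le_two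
    rw [Set.finrank, h6] at h5
    have : FiniteDimensional k (Submodule.span k {p.homogenize c, q.homogenize c}) :=
      FiniteDimensional.span_of_finite k (by simp)
    have h8 := Submodule.finrank_mono h4
    omega
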